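/- Let Ω be a bounded open subset of ℝ² with C² boundary, and let f₀, f₁ be continuously differentiable real-valued functions with compact supports contained in Ω. Then the function k ↦ I₁(k) is holomorphic on ℂ∖(−∞,0], and the function k ↦ I₂(k) is holomorphic on ℂ∖(−∞,0]. -/

import Mathlib

/-!
The proof rests on the notion of a *bounded holomorphic family* (`BddHolo`): functions
`w ↦ F w a` holomorphic on the slit plane and bounded, uniformly in `a`, on bounded parts of it.
Such families are stable under sums, products, positive dilations of `w` and, by Cauchy's estimate
and differentiation under the integral sign, under integration in `a` over a set of finite measure
(`BddHolo.integral`). So it is enough to exhibit `I₁` and `I₂` as iterated integrals of such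
families.

Both Hankel functions have the form `h(z) = A(z) + B(z) log(z/2)` with `A`, `B` entire, so `z h(z)`
and `z h'(z)` are bounded near `0`. The sources are supported in a compact subset of `Ω`, which
lies at positive distance from `∂Ω`; hence `|x - y|` stays in a compact interval `[d, M]` with
`d > 0`, and `w h(w|x - y|)`, as well as `w` times its gradient in `x`, is a bounded holomorphic
family indexed by `(x, y)`. The factor `ω²` supplies exactly one `w` for each of the two
potentials. Integrating over `y` (`layer`), over `x ∈ ∂Ω`, and finally over `s ∈ (0, 1)` after the
dilation `w = ks` gives the result (`differentiableOn_contour`). The middle step needs the length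
of `∂Ω` to be finite, which is where the regularity of the boundary enters
(`hausdorffMeasure_frontier_lt_top`).
-/

open MeasureTheory Real Complex Filter

noncomputable section

/-- The Euclidean plane. -/
abbrev E2 : Type := EuclideanSpace ℝ (Fin 2)

/-- Bessel function `J₀` (power series, entire). -/
def besselJ0 (z : ℂ) : ℂ :=
  ∑' m : ℕ, ((-1 : ℂ) ^ m * (z / 2) ^ (2 * m)) / ((m.factorial : ℂ)) ^ 2

/-- Partial harmonic sum `1 + 1/2 + ⋯ + 1/m`. -/
def harmSum (m : ℕ) : ℂ := ∑ j ∈ Finset.range m, (1 : ℂ) / (j + 1)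

/-- Bessel function `Y₀` (with the principal branch of the logarithm). -/
def besselY0 (z : ℂ) : ℂ :=
  (2 / Real.pi) * (((Real.eulerMascheroniConstant : ℂ) + Complex.log (z / 2)) * besselJ0 z
    - ∑' m : ℕ, ((-1 : ℂ) ^ (m + 1) * (z / 2) ^ (2 * (m + 1)) * harmSum (m + 1)) /
        (((m + 1).factorial : ℂ)) ^ 2)

/-- Hankel function of the first kind of order zero, `H₀⁽¹⁾ = J₀ + iY₀`. -/
def hankelH0 (z : ℂ) : ℂ := besselJ0 z + Complex.I * besselY0 z

/-- The "conjugate" Hankel function `H̄₀⁽¹⁾ = J₀ − iY₀`. -/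
def hankelH0bar (z : ℂ) : ℂ := besselJ0 z - Complex.I * besselY0 z

/-- The radiating scattering solution of `(Δ + k²)u = −f₁ − i k f₀`:
`u(x,k) = (−i/4)∫_Ω H₀⁽¹⁾(k|x−y|)(f₁(y) + i k f₀(y)) dy`. -/
def scatSol (Ω : Set E2) (f₀ f₁ : E2 → ℝ) (x : E2) (k : ℂ) : ℂ :=
  (-Complex.I / 4) *
    ∫ y in Ω, hankelH0 (k * (‖x - y‖ : ℝ)) * ((f₁ y : ℂ) + Complex.I * k * (f₀ y : ℂ))

/-- Partial derivative of a real valued function in the `i`-th coordinate direction. -/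
def pd (i : Fin 2) (f : E2 → ℝ) : E2 → ℝ := fun x => fderiv ℝ f x (EuclideanSpace.single i 1)

/-- Squared Sobolev norm `‖f‖²_{(m)} = ∑_{|α|≤m} ∫ |∂^α f|²`. -/
def sobNormSq (m : ℕ) (f : E2 → ℝ) : ℝ :=
  ∑ α ∈ (Finset.range (m + 1) ×ˢ Finset.range (m + 1)).filter (fun α => α.1 + α.2 ≤ m),
    ∫ x : E2, ((pd 0)^[α.1] ((pd 1)^[α.2] f) x) ^ 2

/-- Squared euclidean norm of the gradient of a complex valued function on the plane. -/
def gradNormSq (g : E2 → ℂ) (x : E2) : ℝ :=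
  ∑ i : Fin 2, ‖fderiv ℝ g x (EuclideanSpace.single i 1)‖ ^ 2

/-- Squared euclidean norm of the gradient of a real valued function on the plane. -/
def gradNormSqR (g : E2 → ℝ) (x : E2) : ℝ :=
  ∑ i : Fin 2, (fderiv ℝ g x (EuclideanSpace.single i 1)) ^ 2

/-- Laplacian of a complex valued function on the plane (sum of pure second partials). -/
def lapC (g : E2 → ℂ) (x : E2) : ℂ :=
  ∑ i : Fin 2, fderiv ℝ (fun y => fderiv ℝ g y (EuclideanSpace.single i 1)) x
    (EuclideanSpace.single i 1)

/-- Laplacian of a real valued function on the plane. -/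
def lapR (g : E2 → ℝ) (x : E2) : ℝ :=
  ∑ i : Fin 2, fderiv ℝ (fun y => fderiv ℝ g y (EuclideanSpace.single i 1)) x
    (EuclideanSpace.single i 1)

/-- Laplacian of a real valued function on `ℂ ≅ ℝ²`. -/
def lapPlane (g : ℂ → ℝ) (z : ℂ) : ℝ :=
  fderiv ℝ (fun w => fderiv ℝ g w 1) z 1 +
    fderiv ℝ (fun w => fderiv ℝ g w Complex.I) z Complex.I

/-- `C²`-smooth boundary: near every boundary point, `Ω` is a sublevel set of a `C²`
defining function with nonvanishing gradient. -/
def HasC2Boundary (Ω : Set E2) : Prop :=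
  ∀ x ∈ frontier Ω, ∃ (U : Set E2) (g : E2 → ℝ), IsOpen U ∧ x ∈ U ∧ ContDiff ℝ 2 g ∧
    (∀ y ∈ U, fderiv ℝ g y ≠ 0) ∧ (Ω ∩ U = {y ∈ U | g y < 0}) ∧
    (frontier Ω ∩ U = {y ∈ U | g y = 0})

/-- Kirchhoff-type solution of the plane wave equation with initial data `(−f₀, f₁)`,
extended by zero to `t ≤ 0`. -/
def waveSol (f₀ f₁ : E2 → ℝ) (x : E2) (t : ℝ) : ℝ :=
  if t ≤ 0 then 0 else
    (1 / (2 * Real.pi)) * ∫ y in Metric.ball x t, f₁ y / Real.sqrt (t ^ 2 - ‖x - y‖ ^ 2)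
    - deriv (fun τ : ℝ =>
        (1 / (2 * Real.pi)) * ∫ y in Metric.ball x τ, f₀ y / Real.sqrt (τ ^ 2 - ‖x - y‖ ^ 2)) t

/-- The quantity `I₁(k)`: the contour integral (along the segment from `0` to `k`,
parametrized by `ω = ks`) of `2ω²∫_{∂Ω} u(x,ω)ū(x,ω)`. -/
def I1 (Ω : Set E2) (f₀ f₁ : E2 → ℝ) (k : ℂ) : ℂ :=
  2 * k * ∫ s in Set.Ioo (0 : ℝ) 1, (k * s) ^ 2 *
    ∫ x in frontier Ω,
      ((-Complex.I / 4) * ∫ y in Ω,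
        ((f₁ y : ℂ) + Complex.I * (k * s) * (f₀ y : ℂ)) * hankelH0 (k * s * (‖x - y‖ : ℝ))) *
      ((Complex.I / 4) * ∫ y in Ω,
        ((f₁ y : ℂ) - Complex.I * (k * s) * (f₀ y : ℂ)) * hankelH0bar (k * s * (‖x - y‖ : ℝ)))
      ∂(μH[1])

/-- The quantity `I₂(k)`: as `I₁(k)` but with the spatial gradients of the Hankel kernels,
paired by the dot product. -/
def I2 (Ω : Set E2) (f₀ f₁ : E2 → ℝ) (k : ℂ) : ℂ :=
  2 * k * ∫ s in Set.Ioo (0 : ℝ) 1, (k * s) ^ 2 *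
    ∫ x in frontier Ω,
      ∑ i : Fin 2,
        ((-Complex.I / 4) * ∫ y in Ω,
          ((f₁ y : ℂ) + Complex.I * (k * s) * (f₀ y : ℂ)) *
            fderiv ℝ (fun x' => hankelH0 (k * s * (‖x' - y‖ : ℝ))) x
              (EuclideanSpace.single i 1)) *
        ((Complex.I / 4) * ∫ y in Ω,
          ((f₁ y : ℂ) - Complex.I * (k * s) * (f₀ y : ℂ)) *
            fderiv ℝ (fun x' => hankelH0bar (k * s * (‖x' - y‖ : ℝ))) x
              (EuclideanSpace.single i 1))
      ∂(μH[1])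

end

/-! ### Bounded holomorphic families -/

/-- The slit plane is invariant under positive dilations. -/
theorem mul_ofReal_mem_slitPlane {w : ℂ} (hw : w ∈ Complex.slitPlane) {r : ℝ} (hr : 0 < r) :
    w * r ∈ Complex.slitPlane := by
  rw [Complex.mem_slitPlane_iff] at hw ⊢
  rcases hw with h | h
  · left; simpa using mul_pos h hr
  · right; simpa using ⟨h, hr.ne'⟩

/-- A family `w ↦ F w a`, indexed by `a ∈ T`, of holomorphic functions on the slit plane which is
bounded, uniformly in `a`, on each bounded part of the slit plane. In particular the bound is
required to hold up to the slit and up to the origin. -/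
def BddHolo {α : Type*} (T : Set α) (F : ℂ → α → ℂ) : Prop :=
  (∀ a ∈ T, DifferentiableOn ℂ (fun w => F w a) Complex.slitPlane) ∧
    ∀ R : ℝ, ∃ C : ℝ, ∀ w ∈ Complex.slitPlane, ‖w‖ ≤ R → ∀ a ∈ T, ‖F w a‖ ≤ C

namespace BddHolo

variable {α β : Type*} {T : Set α} {F G : ℂ → α → ℂ}

theorem congr (hF : BddHolo T F) (h : ∀ w ∈ Complex.slitPlane, ∀ a ∈ T, G w a = F w a) :
    BddHolo T G := by
  refine ⟨fun a ha => (hF.1 a ha).congr fun w hw => h w hw a ha, fun R => ?_⟩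
  obtain ⟨C, hC⟩ := hF.2 R
  exact ⟨C, fun w hw hR a ha => by rw [h w hw a ha]; exact hC w hw hR a ha⟩

theorem mul (hF : BddHolo T F) (hG : BddHolo T G) : BddHolo T (fun w a => F w a * G w a) := by
  refine ⟨fun a ha => (hF.1 a ha).mul (hG.1 a ha), fun R => ?_⟩
  obtain ⟨C, hC⟩ := hF.2 R
  obtain ⟨D, hD⟩ := hG.2 R
  refine ⟨C * D, fun w hw hR a ha => ?_⟩
  have h1 := hC w hw hR a ha
  have h2 := hD w hw hR a ha
  rw [norm_mul]
  exact mul_le_mul h1 h2 (norm_nonneg _) ((norm_nonneg _).trans h1)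

theorem add (hF : BddHolo T F) (hG : BddHolo T G) : BddHolo T (fun w a => F w a + G w a) := by
  refine ⟨fun a ha => (hF.1 a ha).add (hG.1 a ha), fun R => ?_⟩
  obtain ⟨C, hC⟩ := hF.2 R
  obtain ⟨D, hD⟩ := hG.2 R
  exact ⟨C + D, fun w hw hR a ha =>
    (norm_add_le _ _).trans (add_le_add (hC w hw hR a ha) (hD w hw hR a ha))⟩

theorem sum {ι : Type*} (s : Finset ι) {F : ι → ℂ → α → ℂ} (hF : ∀ i ∈ s, BddHolo T (F i)) :
    BddHolo T (fun w a => ∑ i ∈ s, F i w a) := by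
  classical
  induction s using Finset.induction_on with
  | empty => exact ⟨fun a _ => by simp, fun R => ⟨0, by simp⟩⟩
  | insert i s hi ih =>
    simp only [Finset.sum_insert hi]
    exact (hF i (by simp)).add (ih fun j hj => hF j (by simp [hj]))

/-- A family bounded on `T` which does not depend on `w`. -/
theorem const {c : α → ℂ} {C : ℝ} (hc : ∀ a ∈ T, ‖c a‖ ≤ C) : BddHolo T (fun _ a => c a) :=
  ⟨fun _ _ => differentiableOn_const _, fun _ => ⟨C, fun _ _ _ a ha => hc a ha⟩⟩

theorem id : BddHolo T (fun w _ => w) :=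
  ⟨fun _ _ => differentiableOn_id, fun R => ⟨R, fun _ _ h _ _ => h⟩⟩

theorem comp {S : Set β} (hF : BddHolo T F) {g : β → α} (hg : Set.MapsTo g S T) :
    BddHolo S (fun w b => F w (g b)) := by
  refine ⟨fun b hb => hF.1 _ (hg hb), fun R => ?_⟩
  obtain ⟨C, hC⟩ := hF.2 R
  exact ⟨C, fun w hw hR b hb => hC w hw hR _ (hg hb)⟩

/-- Rescaling of the holomorphic variable by positive reals from a bounded set: the slit plane is
invariant, and bounded sets stay bounded. -/
theorem scale (hF : BddHolo T F) {g : α → ℝ} {M : ℝ} (h0 : ∀ a ∈ T, 0 < g a)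
    (hM : ∀ a ∈ T, g a ≤ M) : BddHolo T (fun w a => F (w * g a) a) := by
  have key : ∀ w ∈ Complex.slitPlane, ∀ a ∈ T, w * g a ∈ Complex.slitPlane :=
    fun w hw a ha => mul_ofReal_mem_slitPlane hw (h0 a ha)
  refine ⟨fun a ha => ?_, fun R => ?_⟩
  · exact (hF.1 a ha).comp (by fun_prop) fun w hw => key w hw a ha
  · obtain ⟨C, hC⟩ := hF.2 (R * M)
    refine ⟨C, fun w hw hR a ha => hC _ (key w hw a ha) ?_ a ha⟩
    have := h0 a ha
    rw [norm_mul, Complex.norm_real, Real.norm_of_nonneg this.le]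
    exact mul_le_mul hR (hM a ha) this.le ((norm_nonneg _).trans hR)

/-- Integration over a set of finite measure preserves bounded holomorphic families: the
derivative is dominated locally by Cauchy's estimate, so one may differentiate under the
integral. -/
theorem integral [MeasurableSpace β] {μ : Measure β} {S : Set β} (hS : MeasurableSet S)
    (hμ : μ S < ⊤) {F : ℂ → α → β → ℂ} (hF : BddHolo (T ×ˢ S) (fun w p => F w p.1 p.2))
    (hm : ∀ w ∈ Complex.slitPlane, ∀ a ∈ T, AEStronglyMeasurable (F w a) (μ.restrict S)) :
    BddHolo T (fun w a => ∫ b in S, F w a b ∂μ) := by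
  have hfin : IsFiniteMeasure (μ.restrict S) := ⟨by simpa using hμ⟩
  constructor
  · intro a ha w₀ hw₀
    obtain ⟨r₀, hr₀, hsub⟩ :=
      Metric.nhds_basis_closedBall.mem_iff.1 (Complex.isOpen_slitPlane.mem_nhds hw₀)
    obtain ⟨r, hr, rfl⟩ : ∃ r : ℝ, 0 < r ∧ 2 * r = r₀ := ⟨r₀ / 2, by positivity, by ring⟩
    obtain ⟨C, hC⟩ := hF.2 (‖w₀‖ + 2 * r)
    have hbd : ∀ w ∈ Metric.closedBall w₀ (2 * r), ∀ b ∈ S, ‖F w a b‖ ≤ C := by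
      intro w hw b hb
      refine hC w (hsub hw) ?_ (a, b) ⟨ha, hb⟩
      rw [mem_closedBall_iff_norm] at hw
      calc ‖w‖ = ‖w₀ + (w - w₀)‖ := by congr 1; ring
        _ ≤ _ := (norm_add_le _ _).trans (by linarith)
    have hd : ∀ b ∈ S, ∀ w ∈ Complex.slitPlane,
        HasDerivAt (fun w => F w a b) (deriv (fun w => F w a b) w) w := fun b hb w hw =>
      ((hF.1 (a, b) ⟨ha, hb⟩).differentiableAt (Complex.isOpen_slitPlane.mem_nhds hw)).hasDerivAt
    have hder : ∀ b ∈ S, ∀ w ∈ Metric.ball w₀ r, ‖deriv (fun w => F w a b) w‖ ≤ C / r := by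
      intro b hb w hw
      have hcb : Metric.closedBall w r ⊆ Metric.closedBall w₀ (2 * r) := by
        apply Metric.closedBall_subset_closedBall'
        have := Metric.mem_ball.1 hw
        linarith
      refine Complex.norm_deriv_le_of_forall_mem_sphere_norm_le hr
        ((hF.1 (a, b) ⟨ha, hb⟩).diffContOnCl_ball (hcb.trans hsub)) fun z hz => ?_
      exact hbd z (hcb (Metric.sphere_subset_closedBall hz)) b hb
    have hball : Metric.ball w₀ r ⊆ Complex.slitPlane := fun w hw =>
      hsub (Metric.closedBall_subset_closedBall (by linarith) (Metric.ball_subset_closedBall hw))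
    -- the derivative is measurable, as a limit of difference quotients along `r / (n + 2)`
    have hF' : AEStronglyMeasurable (fun b => deriv (fun w => F w a b) w₀) (μ.restrict S) := by
      have hpos : ∀ n : ℕ, 0 < r / ((n : ℝ) + 2) := fun n => by positivity
      have hlim : Tendsto (fun n : ℕ => r / ((n : ℝ) + 2)) atTop (nhds 0) :=
        tendsto_const_nhds.div_atTop
          (tendsto_atTop_add_const_right _ _ tendsto_natCast_atTop_atTop)
      have hlim' : Tendsto (fun n : ℕ => ((r / ((n : ℝ) + 2) : ℝ) : ℂ)) atTop
          (nhdsWithin 0 {0}ᶜ) := by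
        refine tendsto_nhdsWithin_iff.2 ⟨?_, Eventually.of_forall fun n => ?_⟩
        · exact_mod_cast (Complex.continuous_ofReal.tendsto 0).comp hlim
        · simpa only [Set.mem_compl_iff, Set.mem_singleton_iff, Complex.ofReal_eq_zero]
            using (hpos n).ne'
      refine aestronglyMeasurable_of_tendsto_ae (atTop : Filter ℕ)
        (f := fun n b => (((r / ((n : ℝ) + 2) : ℝ) : ℂ))⁻¹ •
          (F (w₀ + ((r / ((n : ℝ) + 2) : ℝ) : ℂ)) a b - F w₀ a b)) (fun n => ?_) ?_
      · refine ((hm (w₀ + ((r / ((n : ℝ) + 2) : ℝ) : ℂ)) (hball ?_) a ha).sub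
          (hm _ hw₀ a ha)).const_smul ((((r / ((n : ℝ) + 2) : ℝ) : ℂ))⁻¹)
        rw [mem_ball_iff_norm, add_sub_cancel_left, Complex.norm_real,
          Real.norm_of_nonneg (hpos n).le, div_lt_iff₀ (by positivity)]
        nlinarith [(Nat.cast_nonneg n : (0 : ℝ) ≤ n)]
      · refine (ae_restrict_iff' hS).2 (Eventually.of_forall fun b hb => ?_)
        exact (hasDerivAt_iff_tendsto_slope_zero.1 (hd b hb w₀ hw₀)).comp hlim'
    have hint : Integrable (F w₀ a) (μ.restrict S) :=
      Integrable.of_bound (hm w₀ hw₀ a ha) C ((ae_restrict_iff' hS).2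
        (Eventually.of_forall fun b hb => hbd w₀ (Metric.mem_closedBall_self (by linarith)) b hb))
    have := (hasDerivAt_integral_of_dominated_loc_of_deriv_le (F := fun w b => F w a b)
      (bound := fun _ => C / r) (Metric.ball_mem_nhds w₀ hr)
      (Filter.mem_of_superset (Complex.isOpen_slitPlane.mem_nhds hw₀) fun w hw => hm w hw a ha)
      hint hF'
      ((ae_restrict_iff' hS).2 (Eventually.of_forall fun b hb w hw => hder b hb w hw))
      (integrable_const _)
      ((ae_restrict_iff' hS).2
        (Eventually.of_forall fun b hb w hw => hd b hb w (hball hw)))).2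
    exact this.differentiableAt.differentiableWithinAt
  · intro R
    obtain ⟨C, hC⟩ := hF.2 R
    exact ⟨C * μ.real S, fun w hw hR a ha => norm_setIntegral_le_of_norm_le_const hμ
      fun b hb => hC w hw hR (a, b) ⟨ha, hb⟩⟩

end BddHolo

/-! ### Finiteness of the length of the boundary -/

/-- The boundary is compact, so finiteness is local. Near `x ∈ ∂Ω`, strict differentiability of the
defining function `g` makes the difference of two zeros of `g` almost orthogonal to `∇g(x)`, so the
coordinate along the tangent line at `x` is antilipschitz on `∂Ω`, and it takes values in a
bounded subset of `ℝ`. -/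
theorem hausdorffMeasure_frontier_lt_top {Ω : Set E2} (hΩb : Bornology.IsBounded Ω)
    (hΩ2 : HasC2Boundary Ω) : (μH[1] : Measure E2) (frontier Ω) < ⊤ := by
  have hcpt : IsCompact (frontier Ω) :=
    hΩb.isCompact_closure.of_isClosed_subset isClosed_frontier frontier_subset_closure
  refine hcpt.measure_lt_top_of_nhdsWithin fun x hx => ?_
  obtain ⟨U, g, hUo, hxU, hg, hdg, -, hU⟩ := hΩ2 x hx
  set L := fderiv ℝ g x with hL
  set a : ℝ := L (EuclideanSpace.single 0 1) with ha
  set b : ℝ := L (EuclideanSpace.single 1 1) with hb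
  have hLv : ∀ v : E2, L v = a * v 0 + b * v 1 := by
    intro v
    have : v = v 0 • EuclideanSpace.single 0 (1 : ℝ) + v 1 • EuclideanSpace.single 1 (1 : ℝ) := by
      ext i; fin_cases i <;> simp
    conv_lhs => rw [this]
    rw [map_add, map_smul, map_smul, smul_eq_mul, smul_eq_mul]
    ring
  have hA : 0 < a ^ 2 + b ^ 2 := by
    rcases eq_or_ne a 0 with h0 | h0
    · rcases eq_or_ne b 0 with h1 | h1
      · exact absurd (ContinuousLinearMap.ext fun v => by
          rw [← hL, hLv, h0, h1]; simp) (hdg x hxU)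
      · positivity
    · positivity
  -- the coordinate along the tangent line at `x`
  set P : E2 → ℝ := fun v => a * v 1 - b * v 0 with hP
  have hPc : Continuous P := by fun_prop
  have hstr : HasStrictFDerivAt g L x := hg.contDiffAt.hasStrictFDerivAt (by norm_num)
  have hev := hstr.isLittleO.def (c := √(a ^ 2 + b ^ 2) / 2) (by positivity)
  rw [nhds_prod_eq] at hev
  obtain ⟨V, hV, hVg⟩ := Filter.eventually_prod_self_iff'.1 hev
  set S : Set E2 := frontier Ω ∩ U ∩ V with hS
  refine ⟨S, ?_, ?_⟩
  · rw [hS, Set.inter_assoc]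
    exact Filter.inter_mem self_mem_nhdsWithin
      (mem_nhdsWithin_of_mem_nhds (Filter.inter_mem (hUo.mem_nhds hxU) hV))
  have hS0 : ∀ p ∈ S, g p = 0 := fun p hp => by
    have : p ∈ frontier Ω ∩ U := hp.1
    rw [hU] at this
    exact this.2
  have hanti : ∀ p ∈ S, ∀ q ∈ S, dist p q ≤ 2 / √(a ^ 2 + b ^ 2) * dist (P p) (P q) := by
    intro p hp q hq
    have h1 := hVg p hp.2 q hq.2
    simp only [hS0 p hp, hS0 q hq, sub_self, zero_sub, norm_neg, hLv] at h1
    have hn : ‖p - q‖ ^ 2 = (p - q) 0 ^ 2 + (p - q) 1 ^ 2 := by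
      rw [EuclideanSpace.norm_sq_eq, Fin.sum_univ_two]; simp
    have hs := Real.sq_sqrt hA.le
    have hs0 := Real.sqrt_pos.2 hA
    have h2 : (a * (p - q) 0 + b * (p - q) 1) ^ 2 ≤ (√(a ^ 2 + b ^ 2) / 2 * ‖p - q‖) ^ 2 := by
      rw [← sq_abs]
      exact pow_le_pow_left₀ (abs_nonneg _) h1 2
    have hPd : P p - P q = a * (p - q) 1 - b * (p - q) 0 := by
      simp only [hP, PiLp.sub_apply]; ring
    rw [dist_eq_norm, dist_eq_norm, hPd, Real.norm_eq_abs, div_mul_eq_mul_div, le_div_iff₀ hs0]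
    refine abs_le_of_sq_le_sq' ?_ (by positivity) |>.2
    rw [mul_pow, mul_pow, sq_abs, hs]
    rw [mul_pow, div_pow, hs, hn] at h2
    rw [hn]
    nlinarith
  have hL' : AntilipschitzWith (Real.toNNReal (2 / √(a ^ 2 + b ^ 2))) (fun p : S => P p) := by
    refine AntilipschitzWith.of_le_mul_dist fun p q => ?_
    rw [Real.coe_toNNReal _ (by positivity)]
    exact hanti p p.2 q q.2
  have h1 := hL'.le_hausdorffMeasure_image (d := 1) zero_le_one Set.univ
  have h2 := (isometry_subtype_coe (s := S)).hausdorffMeasure_image (d := 1) (Or.inl zero_le_one)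
    Set.univ
  rw [Set.image_univ, Subtype.range_coe] at h2
  rw [h2]
  refine h1.trans_lt (ENNReal.mul_lt_top (by simp) ?_)
  rw [hausdorffMeasure_real]
  have hbd : Bornology.IsBounded (P '' frontier Ω) := (hcpt.image hPc).isBounded
  refine (hbd.subset ?_).measure_lt_top
  rintro _ ⟨p, -, rfl⟩
  exact ⟨p, p.2.1.1, rfl⟩

/-! ### Cylinder functions with a logarithmic singularity -/

/-- An entire function, regarded as a family without parameter. -/
theorem BddHolo.of_entire {α : Type*} {T : Set α} {A : ℂ → ℂ} (hA : Differentiable ℂ A) :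
    BddHolo T (fun w _ => A w) := by
  refine ⟨fun _ _ => hA.differentiableOn, fun R => ?_⟩
  obtain ⟨C, hC⟩ :=
    (isCompact_closedBall (0 : ℂ) R).exists_bound_of_continuousOn hA.continuous.continuousOn
  exact ⟨C, fun w _ hR _ _ => hC w (by simpa using hR)⟩

theorem div_two_mem_slitPlane {w : ℂ} (hw : w ∈ Complex.slitPlane) :
    w / 2 ∈ Complex.slitPlane := by
  have := mul_ofReal_mem_slitPlane hw (r := 1 / 2) (by norm_num)
  rwa [div_eq_mul_one_div, show (1 / 2 : ℂ) = ((1 / 2 : ℝ) : ℂ) by norm_num]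

theorem BddHolo.mul_log {α : Type*} {T : Set α} :
    BddHolo T (fun w _ => w * Complex.log (w / 2)) := by
  refine ⟨fun _ _ => differentiableOn_id.mul
    (DifferentiableOn.clog (by fun_prop) fun w hw => div_two_mem_slitPlane hw), fun R => ?_⟩
  obtain ⟨C, hC⟩ :=
    (isCompact_Icc (a := (0 : ℝ)) (b := R / 2)).exists_bound_of_continuousOn
      Real.continuous_mul_log.continuousOn
  refine ⟨2 * C + R * Real.pi, fun w hw hR _ _ => ?_⟩
  have h1 := hC (‖w‖ / 2) ⟨by positivity, by linarith⟩
  have h2 : ‖Complex.log (w / 2)‖ ≤ |Real.log (‖w‖ / 2)| + Real.pi := by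
    refine (Complex.norm_le_abs_re_add_abs_im _).trans (add_le_add ?_ ?_)
    · rw [Complex.log_re, norm_div]; simp
    · rw [Complex.log_im]; exact Complex.abs_arg_le_pi _
  rw [norm_mul, Real.norm_eq_abs, abs_of_nonneg (by positivity : 0 ≤ ‖w‖ / 2)] at h1
  rw [norm_mul]
  calc ‖w‖ * ‖Complex.log (w / 2)‖ ≤ ‖w‖ * (|Real.log (‖w‖ / 2)| + Real.pi) := by gcongr
    _ = 2 * (‖w‖ / 2 * |Real.log (‖w‖ / 2)|) + ‖w‖ * Real.pi := by ring
    _ ≤ _ := by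
      rw [Real.norm_eq_abs] at h1
      gcongr

/-- Functions of the form `A(z) + B(z) log(z/2)` with `A`, `B` entire: the common shape of the two
Hankel functions of order zero. -/
def IsEntireLog (h : ℂ → ℂ) : Prop :=
  ∃ A B : ℂ → ℂ, Differentiable ℂ A ∧ Differentiable ℂ B ∧
    ∀ z, h z = A z + B z * Complex.log (z / 2)

namespace IsEntireLog

variable {h : ℂ → ℂ} {α : Type*} {T : Set α}

theorem differentiableOn (hh : IsEntireLog h) : DifferentiableOn ℂ h Complex.slitPlane := by
  obtain ⟨A, B, hA, hB, e⟩ := hh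
  rw [funext e]
  exact hA.differentiableOn.add (hB.differentiableOn.mul
    (DifferentiableOn.clog (by fun_prop) fun w hw => div_two_mem_slitPlane hw))

theorem bddHolo (hh : IsEntireLog h) : BddHolo T (fun w _ => w * h w) := by
  obtain ⟨A, B, hA, hB, e⟩ := hh
  have := (BddHolo.id (T := T).mul (BddHolo.of_entire hA)).add
    ((BddHolo.of_entire hB).mul BddHolo.mul_log)
  refine this.congr fun w _ _ _ => ?_
  rw [e]; ring

theorem deriv_eq {A B : ℂ → ℂ} (hA : Differentiable ℂ A) (hB : Differentiable ℂ B)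
    (e : ∀ z, h z = A z + B z * Complex.log (z / 2)) {w : ℂ} (hw : w ∈ Complex.slitPlane) :
    w * deriv h w = w * deriv A w + deriv B w * (w * Complex.log (w / 2)) + B w := by
  have hw0 := Complex.slitPlane_ne_zero hw
  have hl : HasDerivAt (fun z : ℂ => Complex.log (z / 2)) (1 / 2 / (w / 2)) w :=
    ((hasDerivAt_id w).div_const 2).clog (div_two_mem_slitPlane hw)
  have := (hA w).hasDerivAt.fun_add ((hB w).hasDerivAt.fun_mul hl)
  rw [funext e, HasDerivAt.deriv this]
  field_simp
  ring

theorem bddHolo_deriv (hh : IsEntireLog h) : BddHolo T (fun w _ => w * deriv h w) := by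
  obtain ⟨A, B, hA, hB, e⟩ := hh
  have := ((BddHolo.id (T := T).mul (BddHolo.of_entire hA.deriv)).add
    ((BddHolo.of_entire hB.deriv).mul BddHolo.mul_log)).add (BddHolo.of_entire hB)
  exact this.congr fun w hw _ _ => deriv_eq hA hB e hw

end IsEntireLog

/-- A series of entire functions whose `m`-th term is `O(xᵐ / m!)` on each disc, for some `x`
depending on the disc, is entire. -/
theorem differentiable_tsum_of_factorial_bound {F : ℕ → ℂ → ℂ} (hF : ∀ m, Differentiable ℂ (F m))
    (hb : ∀ R : ℝ, 0 ≤ R → ∃ D x : ℝ, ∀ m w, ‖w‖ ≤ R → ‖F m w‖ ≤ D * (x ^ m / m.factorial)) :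
    Differentiable ℂ (fun w => ∑' m, F m w) := by
  intro w
  obtain ⟨D, x, hD⟩ := hb (‖w‖ + 1) (by positivity)
  refine (Complex.differentiableOn_tsum_of_summable_norm
    ((Real.summable_pow_div_factorial x).mul_left D) (fun m => (hF m).differentiableOn)
    (Metric.isOpen_ball (x := 0) (ε := ‖w‖ + 1)) fun m z hz => hD m z ?_).differentiableAt
    (Metric.isOpen_ball.mem_nhds (by simp))
  simpa using (Metric.mem_ball.1 hz).le

theorem norm_div_two_pow_le {R : ℝ} {w : ℂ} (hw : ‖w‖ ≤ R) (m : ℕ) :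
    ‖(w / 2) ^ (2 * m)‖ ≤ (R ^ 2) ^ m := by
  rw [norm_pow, pow_mul]
  have : ‖w / 2‖ ≤ R := by
    rw [norm_div]; norm_num; linarith [norm_nonneg w]
  gcongr

theorem differentiable_besselJ0 : Differentiable ℂ besselJ0 := by
  refine differentiable_tsum_of_factorial_bound (fun m => by fun_prop) fun R hR =>
    ⟨1, R ^ 2, fun m w hw => ?_⟩
  have h1 := norm_div_two_pow_le hw m
  have h2 : (1 : ℝ) ≤ m.factorial := by exact_mod_cast m.factorial_pos
  rw [norm_div, norm_mul, one_mul]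
  simp only [norm_pow, norm_neg, norm_one, one_pow, one_mul, Complex.norm_natCast] at h1 ⊢
  gcongr
  nlinarith

theorem norm_harmSum_le (m : ℕ) : ‖harmSum m‖ ≤ m := by
  refine (norm_sum_le _ _).trans ?_
  have : ∀ j ∈ Finset.range m, ‖(1 : ℂ) / (j + 1)‖ ≤ 1 := fun j _ => by
    have : ‖(j : ℂ) + 1‖ = (j : ℝ) + 1 := by exact_mod_cast Complex.norm_natCast (j + 1)
    rw [norm_div, this, norm_one]
    exact div_le_one_of_le₀ (by linarith [(Nat.cast_nonneg j : (0 : ℝ) ≤ j)]) (by positivity)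
  simpa using Finset.sum_le_sum this

theorem differentiable_besselY0_series : Differentiable ℂ (fun z : ℂ =>
    ∑' m : ℕ, ((-1 : ℂ) ^ (m + 1) * (z / 2) ^ (2 * (m + 1)) * harmSum (m + 1)) /
        (((m + 1).factorial : ℂ)) ^ 2) := by
  refine differentiable_tsum_of_factorial_bound (fun m => by fun_prop) fun R hR =>
    ⟨R ^ 2, R ^ 2, fun m w hw => ?_⟩
  have h1 := norm_div_two_pow_le hw (m + 1)
  have h2 : (1 : ℝ) ≤ m.factorial := by exact_mod_cast m.factorial_pos
  have h3 := norm_harmSum_le (m + 1)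
  have h4 : ((m + 1).factorial : ℝ) = ((m + 1 : ℕ) : ℝ) * m.factorial := by
    exact_mod_cast Nat.factorial_succ m
  have h5 : (0 : ℝ) < ((m + 1 : ℕ) : ℝ) := by positivity
  have h6 : (1 : ℝ) ≤ ((m + 1 : ℕ) : ℝ) := by simp
  rw [norm_div, norm_mul, norm_mul]
  simp only [norm_pow, norm_neg, norm_one, one_pow, one_mul, Complex.norm_natCast] at h1 ⊢
  rw [h4, div_le_iff₀ (by positivity)]
  calc _ ≤ (R ^ 2) ^ (m + 1) * ((m + 1 : ℕ) : ℝ) := by gcongr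
    _ ≤ (R ^ 2) ^ (m + 1) * (((m + 1 : ℕ) : ℝ) * (((m + 1 : ℕ) : ℝ) * m.factorial)) := by
      gcongr
      nlinarith [mul_le_mul h6 h2 zero_le_one h5.le]
    _ = _ := by field_simp; ring

theorem isEntireLog_besselJ0_add_mul (c : ℂ) :
    IsEntireLog (fun z => besselJ0 z + c * besselY0 z) := by
  refine ⟨fun z => besselJ0 z + c * (2 / Real.pi) *
      (Real.eulerMascheroniConstant * besselJ0 z - ∑' m : ℕ,
        ((-1 : ℂ) ^ (m + 1) * (z / 2) ^ (2 * (m + 1)) * harmSum (m + 1)) /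
        (((m + 1).factorial : ℂ)) ^ 2), fun z => c * (2 / Real.pi) * besselJ0 z, ?_, ?_, ?_⟩
  · exact differentiable_besselJ0.add (((differentiable_besselJ0.const_mul _).sub
      differentiable_besselY0_series).const_mul _)
  · exact differentiable_besselJ0.const_mul _
  · intro z
    simp only [besselY0]
    ring

theorem isEntireLog_hankelH0 : IsEntireLog hankelH0 := isEntireLog_besselJ0_add_mul Complex.I

theorem isEntireLog_hankelH0bar : IsEntireLog hankelH0bar := by
  have : hankelH0bar = fun z => besselJ0 z + -Complex.I * besselY0 z := by
    funext z; rw [hankelH0bar]; ring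
  rw [this]
  exact isEntireLog_besselJ0_add_mul _

/-- The gradient of the radial kernel `x ↦ h(w|x - y|)` off the diagonal. -/
theorem fderiv_radial {h : ℂ → ℂ} (hh : DifferentiableOn ℂ h Complex.slitPlane) {w : ℂ}
    {x y : E2} (hw : w * (‖x - y‖ : ℝ) ∈ Complex.slitPlane) (hxy : x ≠ y) (i : Fin 2) :
    fderiv ℝ (fun x' => h (w * (‖x' - y‖ : ℝ))) x (EuclideanSpace.single i 1) =
      w * deriv h (w * (‖x - y‖ : ℝ)) * (((x - y) i / ‖x - y‖ : ℝ) : ℂ) := by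
  have hne : ‖x - y‖ ≠ 0 := norm_ne_zero_iff.2 (sub_ne_zero.2 hxy)
  have h1 : HasDerivAt h (deriv h (w * (‖x - y‖ : ℝ))) (w * (‖x - y‖ : ℝ)) :=
    (hh.differentiableAt (Complex.isOpen_slitPlane.mem_nhds hw)).hasDerivAt
  have h2 : HasFDerivAt (fun x' : E2 => ‖x' - y‖ ^ 2) _ x :=
    ((hasFDerivAt_id x).sub_const y).norm_sq
  have h3 := h2.sqrt (by positivity)
  simp only [Real.sqrt_sq (norm_nonneg _)] at h3
  have h4 := (Complex.ofRealCLM.hasFDerivAt.comp x h3).const_mul w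
  have h5 := (h1.hasFDerivAt.restrictScalars ℝ).comp x h4
  have h6 := h5.fderiv
  have h7 : (fun x' : E2 => h (w * (‖x' - y‖ : ℝ))) =
    h ∘ fun x' => w * (Complex.ofRealCLM ∘ fun x' : E2 => ‖x' - y‖) x' := rfl
  rw [h7, h6]
  simp [EuclideanSpace.inner_single_right]
  field_simp

/-! ### The boundary integrals -/

/-- One factor of the boundary integrand, multiplied by `w` to absorb the singularity at `w = 0`:
a bounded holomorphic family indexed by the boundary point `x ∈ Γ`, continuous in `x`. -/
theorem layer {Ω Γ S : Set E2} (hS : IsCompact S) (hSΩ : S ⊆ Ω)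
    (hΩ : MeasurableSet Ω) {φ : ℂ → E2 → ℂ} (hφ : BddHolo S φ)
    (hφc : ∀ w, Continuous (φ w)) (hφ0 : ∀ w, ∀ y ∉ S, φ w y = 0) {K : ℂ → E2 → E2 → ℂ}
    (hK : BddHolo (Γ ×ˢ S) (fun w p => w * K w p.1 p.2))
    (hKc : ∀ w ∈ Complex.slitPlane, ContinuousOn (fun p : E2 × E2 => K w p.1 p.2) (Γ ×ˢ S))
    (c : ℂ) :
    BddHolo Γ (fun w x => w * (c * ∫ y in Ω, φ w y * K w x y)) ∧
      ∀ w ∈ Complex.slitPlane,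
        ContinuousOn (fun x => w * (c * ∫ y in Ω, φ w y * K w x y)) Γ := by
  have hSm := hS.measurableSet
  have hSfin : volume S < ⊤ := hS.measure_lt_top
  have e : ∀ w x, w * (c * ∫ y in Ω, φ w y * K w x y) =
      ∫ y in S, c * (φ w y * (w * K w x y)) := by
    intro w x
    rw [setIntegral_eq_of_subset_of_forall_sdiff_eq_zero hΩ hSΩ fun y hy => by
      rw [hφ0 w y hy.2, zero_mul], ← integral_const_mul, ← integral_const_mul]
    congr 1
    funext y
    ring
  simp only [e]
  have hB : BddHolo (Γ ×ˢ S) (fun w p => c * (φ w p.2 * (w * K w p.1 p.2))) :=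
    (BddHolo.const (c := fun _ => c) (C := ‖c‖) fun _ _ => le_rfl).mul
      ((hφ.comp (g := Prod.snd) fun p hp => hp.2).mul hK)
  have hcy : ∀ w ∈ Complex.slitPlane, ∀ x ∈ Γ,
      ContinuousOn (fun y => c * (φ w y * (w * K w x y))) S := fun w hw x hx =>
    continuousOn_const.mul ((hφc w).continuousOn.mul (continuousOn_const.mul
      ((hKc w hw).comp (f := fun y => (x, y)) (by fun_prop) fun y hy => ⟨hx, hy⟩)))
  have hcx : ∀ w ∈ Complex.slitPlane, ∀ y ∈ S,
      ContinuousOn (fun x => c * (φ w y * (w * K w x y))) Γ := fun w hw y hy =>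
    continuousOn_const.mul (continuousOn_const.mul (continuousOn_const.mul
      ((hKc w hw).comp (f := fun x => (x, y)) (by fun_prop) fun x hx => ⟨hx, hy⟩)))
  have hm : ∀ w ∈ Complex.slitPlane, ∀ x ∈ Γ,
      AEStronglyMeasurable (fun y => c * (φ w y * (w * K w x y))) (volume.restrict S) :=
    fun w hw x hx => (hcy w hw x hx).aestronglyMeasurable hSm
  refine ⟨BddHolo.integral hSm hSfin (F := fun w x y => c * (φ w y * (w * K w x y))) hB hm, ?_⟩
  intro w hw
  obtain ⟨C, hC⟩ := hB.2 ‖w‖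
  have hfin : IsFiniteMeasure (volume.restrict S) := ⟨by simpa using hSfin⟩
  exact continuousOn_of_dominated (bound := fun _ => C) (hm w hw)
    (fun x hx => (ae_restrict_iff' hSm).2 (Eventually.of_forall fun y hy =>
      hC w hw le_rfl (x, y) ⟨hx, hy⟩)) (integrable_const _)
    ((ae_restrict_iff' hSm).2 (Eventually.of_forall fun y hy => hcx w hw y hy))

/-- The contour integral of a sum of products of two layer potentials is holomorphic, for general
kernels with at most a simple singularity at `w = 0`. -/
theorem differentiableOn_contour {ι : Type*} [Fintype ι] {Ω Γ S : Set E2} (hΓ : IsCompact Γ)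
    (hΓfin : (μH[1] : Measure E2) Γ < ⊤) (hS : IsCompact S) (hSΩ : S ⊆ Ω)
    (hΩ : MeasurableSet Ω) {φ ψ : ℂ → E2 → ℂ} (hφ : BddHolo S φ) (hψ : BddHolo S ψ)
    (hφc : ∀ w, Continuous (φ w)) (hφ0 : ∀ w, ∀ y ∉ S, φ w y = 0)
    (hψc : ∀ w, Continuous (ψ w)) (hψ0 : ∀ w, ∀ y ∉ S, ψ w y = 0)
    {K L : ι → ℂ → E2 → E2 → ℂ}
    (hK : ∀ i, BddHolo (Γ ×ˢ S) (fun w p => w * K i w p.1 p.2))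
    (hKc : ∀ i, ∀ w ∈ Complex.slitPlane,
      ContinuousOn (fun p : E2 × E2 => K i w p.1 p.2) (Γ ×ˢ S))
    (hL : ∀ i, BddHolo (Γ ×ˢ S) (fun w p => w * L i w p.1 p.2))
    (hLc : ∀ i, ∀ w ∈ Complex.slitPlane,
      ContinuousOn (fun p : E2 × E2 => L i w p.1 p.2) (Γ ×ˢ S))
    (c c' : ℂ) :
    DifferentiableOn ℂ (fun k : ℂ => 2 * k * ∫ s in Set.Ioo (0 : ℝ) 1, (k * s) ^ 2 *
      ∫ x in Γ, ∑ i, (c * ∫ y in Ω, φ (k * s) y * K i (k * s) x y) *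
        (c' * ∫ y in Ω, ψ (k * s) y * L i (k * s) x y) ∂(μH[1])) Complex.slitPlane := by
  have h1 := fun i => layer hS hSΩ hΩ hφ hφc hφ0 (hK i) (hKc i) c
  have h2 := fun i => layer hS hSΩ hΩ hψ hψc hψ0 (hL i) (hLc i) c'
  set U : ι → ℂ → E2 → ℂ := fun i w x => w * (c * ∫ y in Ω, φ w y * K i w x y) with hU
  set V : ι → ℂ → E2 → ℂ := fun i w x => w * (c' * ∫ y in Ω, ψ w y * L i w x y) with hV
  set G : ℂ → ℂ := fun w => ∫ x in Γ, ∑ i, U i w x * V i w x ∂(μH[1]) with hG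
  have e : ∀ w : ℂ, w ^ 2 * ∫ x in Γ, ∑ i, (c * ∫ y in Ω, φ w y * K i w x y) *
        (c' * ∫ y in Ω, ψ w y * L i w x y) ∂(μH[1]) = G w := by
    intro w
    rw [← integral_const_mul, hG]
    congr 1
    funext x
    rw [Finset.mul_sum]
    refine Finset.sum_congr rfl fun i _ => ?_
    simp only [hU, hV]
    ring
  simp only [e]
  have hGB : BddHolo (Set.Ioo (0 : ℝ) 1) (fun w _ => G w) := by
    refine BddHolo.integral hΓ.measurableSet hΓfin (F := fun w _ x => ∑ i, U i w x * V i w x) ?_ ?_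
    · exact BddHolo.sum _ fun i _ => ((h1 i).1.mul (h2 i).1).comp (g := Prod.snd) fun p hp => hp.2
    · intro w hw _ _
      refine ContinuousOn.aestronglyMeasurable ?_ hΓ.measurableSet
      exact continuousOn_finsetSum _ fun i _ => ((h1 i).2 w hw).mul ((h2 i).2 w hw)
  have hscale : BddHolo (Set.Ioo (0 : ℝ) 1) (fun (k : ℂ) (s : ℝ) => G (k * s)) :=
    hGB.scale (g := fun s => s) (M := 1) (fun s hs => hs.1) fun s hs => hs.2.le
  have hGd : DifferentiableOn ℂ G Complex.slitPlane := hGB.1 (1 / 2) ⟨by norm_num, by norm_num⟩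
  have hfinal := BddHolo.integral (T := (Set.univ : Set Unit)) (μ := (volume : Measure ℝ))
    (S := Set.Ioo (0 : ℝ) 1) measurableSet_Ioo (by simp) (F := fun k _ s => G (k * s))
    (hscale.comp (g := Prod.snd) fun p hp => hp.2) fun k hk _ _ => by
      refine ContinuousOn.aestronglyMeasurable ?_ measurableSet_Ioo
      refine hGd.continuousOn.comp (f := fun s : ℝ => k * (s : ℂ)) (by fun_prop) fun s hs =>
        mul_ofReal_mem_slitPlane hk hs.1
  exact (DifferentiableOn.const_mul differentiableOn_id 2).mul (hfinal.1 () trivial)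

/-- Disjoint compact sets are at positive distance, and at finite distance. -/
theorem exists_norm_sub_bounds {Γ S : Set E2} (hΓ : IsCompact Γ) (hS : IsCompact S)
    (hd : Disjoint Γ S) : ∃ d M : ℝ, 0 < d ∧
      ∀ p ∈ Γ ×ˢ S, d ≤ ‖p.1 - p.2‖ ∧ ‖p.1 - p.2‖ ≤ M := by
  have hc : ContinuousOn (fun p : E2 × E2 => ‖p.1 - p.2‖) (Γ ×ˢ S) := by fun_prop
  rcases (Γ ×ˢ S).eq_empty_or_nonempty with h | h
  · exact ⟨1, 1, one_pos, by simp [h]⟩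
  obtain ⟨p, hp, hmin⟩ := (hΓ.prod hS).exists_isMinOn h hc
  obtain ⟨q, hq, hmax⟩ := (hΓ.prod hS).exists_isMaxOn h hc
  refine ⟨‖p.1 - p.2‖, ‖q.1 - q.2‖, norm_pos_iff.2 (sub_ne_zero.2 fun e => ?_),
    fun r hr => ⟨hmin hr, hmax hr⟩⟩
  exact Set.disjoint_left.1 hd hp.1 (e ▸ hp.2)

section Kernels

variable {Γ S : Set E2} {d M : ℝ} {h : ℂ → ℂ}

/-- If `w h(w)` is holomorphic and bounded on bounded sets, then so is `w h(wr)`, uniformly for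
`r = |x - y|`, which ranges over the compact interval `[d, M]`. -/
theorem bddHolo_dilate (hd : 0 < d)
    (hdM : ∀ p ∈ Γ ×ˢ S, d ≤ ‖p.1 - p.2‖ ∧ ‖p.1 - p.2‖ ≤ M)
    (hh : BddHolo (Γ ×ˢ S) (fun w _ => w * h w)) :
    BddHolo (Γ ×ˢ S) (fun w p => w * h (w * (‖p.1 - p.2‖ : ℝ))) := by
  have h1 := hh.scale (g := fun p => ‖p.1 - p.2‖) (M := M)
    (fun p hp => hd.trans_le (hdM p hp).1) fun p hp => (hdM p hp).2
  have h2 := (BddHolo.const (T := Γ ×ˢ S) (c := fun p => ((‖p.1 - p.2‖⁻¹ : ℝ) : ℂ))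
    (C := d⁻¹) fun p hp => by
      rw [Complex.norm_real, norm_inv, norm_norm]
      exact inv_anti₀ hd (hdM p hp).1).mul h1
  refine h2.congr fun w _ p hp => ?_
  have : ((‖p.1 - p.2‖ : ℝ) : ℂ) ≠ 0 := by
    exact_mod_cast (hd.trans_le (hdM p hp).1).ne'
  push_cast
  field_simp

theorem continuousOn_radial (hd : 0 < d)
    (hdM : ∀ p ∈ Γ ×ˢ S, d ≤ ‖p.1 - p.2‖ ∧ ‖p.1 - p.2‖ ≤ M)
    (hh : ContinuousOn h Complex.slitPlane) {w : ℂ} (hw : w ∈ Complex.slitPlane) :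
    ContinuousOn (fun p : E2 × E2 => h (w * (‖p.1 - p.2‖ : ℝ))) (Γ ×ˢ S) :=
  hh.comp (f := fun p : E2 × E2 => w * ((‖p.1 - p.2‖ : ℝ) : ℂ)) (by fun_prop)
    fun p hp => mul_ofReal_mem_slitPlane hw (hd.trans_le (hdM p hp).1)

theorem gradKernel_eq (hd : 0 < d)
    (hdM : ∀ p ∈ Γ ×ˢ S, d ≤ ‖p.1 - p.2‖ ∧ ‖p.1 - p.2‖ ≤ M) (hh : IsEntireLog h) {w : ℂ}
    (hw : w ∈ Complex.slitPlane) {p : E2 × E2} (hp : p ∈ Γ ×ˢ S) (i : Fin 2) :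
    fderiv ℝ (fun x' => h (w * (‖x' - p.2‖ : ℝ))) p.1 (EuclideanSpace.single i 1) =
      w * deriv h (w * (‖p.1 - p.2‖ : ℝ)) * (((p.1 - p.2) i / ‖p.1 - p.2‖ : ℝ) : ℂ) := by
  have hpos := hd.trans_le (hdM p hp).1
  exact fderiv_radial hh.differentiableOn (mul_ofReal_mem_slitPlane hw hpos)
    (fun e => by simp [e] at hpos) i

theorem bddHolo_gradKernel (hd : 0 < d)
    (hdM : ∀ p ∈ Γ ×ˢ S, d ≤ ‖p.1 - p.2‖ ∧ ‖p.1 - p.2‖ ≤ M) (hh : IsEntireLog h) (i : Fin 2) :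
    BddHolo (Γ ×ˢ S) (fun w p => w *
      fderiv ℝ (fun x' => h (w * (‖x' - p.2‖ : ℝ))) p.1 (EuclideanSpace.single i 1)) := by
  have h1 := (BddHolo.id.mul (bddHolo_dilate hd hdM hh.bddHolo_deriv)).mul
    (BddHolo.const (T := Γ ×ˢ S)
      (c := fun p => (((p.1 - p.2) i / ‖p.1 - p.2‖ : ℝ) : ℂ)) (C := 1) fun p hp => by
        rw [Complex.norm_real, norm_div, norm_norm]
        exact div_le_one_of_le₀ (PiLp.norm_apply_le _ _) (norm_nonneg _))
  refine h1.congr fun w hw p hp => ?_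
  rw [gradKernel_eq hd hdM hh hw hp]
  ring

theorem continuousOn_gradKernel (hd : 0 < d)
    (hdM : ∀ p ∈ Γ ×ˢ S, d ≤ ‖p.1 - p.2‖ ∧ ‖p.1 - p.2‖ ≤ M) (hh : IsEntireLog h) (i : Fin 2)
    {w : ℂ} (hw : w ∈ Complex.slitPlane) :
    ContinuousOn (fun p : E2 × E2 =>
      fderiv ℝ (fun x' => h (w * (‖x' - p.2‖ : ℝ))) p.1 (EuclideanSpace.single i 1))
      (Γ ×ˢ S) := by
  refine ContinuousOn.congr (f := fun p : E2 × E2 =>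
    w * deriv h (w * (‖p.1 - p.2‖ : ℝ)) * (((p.1 - p.2) i / ‖p.1 - p.2‖ : ℝ) : ℂ)) ?_
    fun p hp => gradKernel_eq hd hdM hh hw hp i
  have h1 := continuousOn_radial hd hdM
    (hh.differentiableOn.deriv Complex.isOpen_slitPlane).continuousOn hw
  refine (continuousOn_const.mul h1).mul (Complex.continuous_ofReal.comp_continuousOn ?_)
  exact ContinuousOn.div (by fun_prop) (by fun_prop)
    fun p hp => (hd.trans_le (hdM p hp).1).ne'

end Kernels

/-- The source term `f + c w g`, for continuous `f`, `g` and a constant `c`. -/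
theorem bddHolo_source {S : Set E2} (hS : IsCompact S) {f g : E2 → ℝ} (hf : Continuous f)
    (hg : Continuous g) (c : ℂ) :
    BddHolo S (fun w y => (f y : ℂ) + c * w * (g y : ℂ)) := by
  obtain ⟨C, hC⟩ := hS.exists_bound_of_continuousOn hf.continuousOn
  obtain ⟨D, hD⟩ := hS.exists_bound_of_continuousOn hg.continuousOn
  refine (BddHolo.const (c := fun y => (f y : ℂ)) (C := C) fun y hy => ?_).add
    (((BddHolo.const (c := fun _ => c) (C := ‖c‖) fun _ _ => le_rfl).mul BddHolo.id).mul
      (BddHolo.const (c := fun y => (g y : ℂ)) (C := D) fun y hy => ?_))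
  · rw [Complex.norm_real]; exact hC y hy
  · rw [Complex.norm_real]; exact hD y hy

/-- **Holomorphy of `I₁` and `I₂`** on the slit plane `ℂ∖(−∞,0]`. -/
theorem I1_I2_holomorphic
    (Ω : Set E2) (hΩo : IsOpen Ω) (hΩb : Bornology.IsBounded Ω) (hΩ2 : HasC2Boundary Ω)
    (f₀ f₁ : E2 → ℝ) (hf₀ : ContDiff ℝ 1 f₀) (hf₁ : ContDiff ℝ 1 f₁)
    (hc₀ : HasCompactSupport f₀) (hc₁ : HasCompactSupport f₁)
    (hs₀ : tsupport f₀ ⊆ Ω) (hs₁ : tsupport f₁ ⊆ Ω) :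
    DifferentiableOn ℂ (I1 Ω f₀ f₁) Complex.slitPlane ∧
      DifferentiableOn ℂ (I2 Ω f₀ f₁) Complex.slitPlane := by
  have hΓ : IsCompact (frontier Ω) :=
    hΩb.isCompact_closure.of_isClosed_subset isClosed_frontier frontier_subset_closure
  have hΓfin := hausdorffMeasure_frontier_lt_top hΩb hΩ2
  set S : Set E2 := tsupport f₀ ∪ tsupport f₁ with hSdef
  have hS : IsCompact S := hc₀.isCompact.union hc₁.isCompact
  have hSΩ : S ⊆ Ω := Set.union_subset hs₀ hs₁
  have hdisj : Disjoint (frontier Ω) S :=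
    (disjoint_frontier_iff_isOpen.2 hΩo).mono_right hSΩ
  obtain ⟨d, M, hd, hdM⟩ := exists_norm_sub_bounds hΓ hS hdisj
  have hz : ∀ y ∉ S, f₀ y = 0 ∧ f₁ y = 0 := fun y hy =>
    ⟨image_eq_zero_of_notMem_tsupport fun h => hy (Or.inl h),
      image_eq_zero_of_notMem_tsupport fun h => hy (Or.inr h)⟩
  have k₀ := hf₀.continuous
  have k₁ := hf₁.continuous
  have hφ := bddHolo_source hS k₁ k₀ Complex.I
  have hψ : BddHolo S (fun w y => (f₁ y : ℂ) - Complex.I * w * (f₀ y : ℂ)) := by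
    simpa only [neg_mul, ← sub_eq_add_neg] using bddHolo_source hS k₁ k₀ (-Complex.I)
  have hH := isEntireLog_hankelH0
  have hH' := isEntireLog_hankelH0bar
  constructor
  · have := differentiableOn_contour (ι := Unit) hΓ hΓfin hS hSΩ hΩo.measurableSet hφ hψ
      (fun w => by fun_prop) (fun w y hy => by simp [hz y hy])
      (fun w => by fun_prop) (fun w y hy => by simp [hz y hy])
      (K := fun _ w x y => hankelH0 (w * (‖x - y‖ : ℝ)))
      (L := fun _ w x y => hankelH0bar (w * (‖x - y‖ : ℝ)))
      (fun _ => bddHolo_dilate hd hdM hH.bddHolo)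
      (fun _ w hw => continuousOn_radial hd hdM hH.differentiableOn.continuousOn hw)
      (fun _ => bddHolo_dilate hd hdM hH'.bddHolo)
      (fun _ w hw => continuousOn_radial hd hdM hH'.differentiableOn.continuousOn hw)
      (-Complex.I / 4) (Complex.I / 4)
    simp only [Finset.univ_unique, Finset.sum_singleton] at this
    exact this
  · exact differentiableOn_contour (ι := Fin 2) hΓ hΓfin hS hSΩ hΩo.measurableSet hφ hψ
      (fun w => by fun_prop) (fun w y hy => by simp [hz y hy])
      (fun w => by fun_prop) (fun w y hy => by simp [hz y hy])
      (K := fun i w x y => fderiv ℝ (fun x' => hankelH0 (w * (‖x' - y‖ : ℝ))) x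
        (EuclideanSpace.single i 1))
      (L := fun i w x y => fderiv ℝ (fun x' => hankelH0bar (w * (‖x' - y‖ : ℝ))) x
        (EuclideanSpace.single i 1))
      (fun i => bddHolo_gradKernel hd hdM hH i)
      (fun i w hw => continuousOn_gradKernel hd hdM hH i hw)
      (fun i => bddHolo_gradKernel hd hdM hH' i)
      (fun i w hw => continuousOn_gradKernel hd hdM hH' i hw)
      (-Complex.I / 4) (Complex.I / 4)
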